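/- Let K ⊆ {z ∈ ℂ : Re(z) ≤ 0} be a nonempty compact convex set such that the intersection K ∩ iℝ of K with the imaginary axis is a singleton. Then no function f ∈ Exp(K) is frequently hypercyclic for T₁ on H(ℂ). -/

import Mathlib

open Filter Complex

/-- Support function `H_K(z) = sup { Re (z·u) : u ∈ K }` of a set `K ⊆ ℂ`. -/
noncomputable def suppFn (K : Set ℂ) (z : ℂ) : ℝ :=
  sSup ((fun u => (z * u).re) '' K)

/-- The norm `‖f‖_{K,n} = sup_z |f z| · exp (−H_K z − |z|/n)`. -/
noncomputable def expNorm (K : Set ℂ) (n : ℕ) (f : ℂ → ℂ) : ℝ :=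
  sSup (Set.range fun z : ℂ => ‖f z‖ * Real.exp (-(suppFn K z) - ‖z‖ / n))

/-- Membership in `Exp(K)`: `f` is entire and all the norms `‖f‖_{K,n}` are finite. -/
def MemExp (K : Set ℂ) (f : ℂ → ℂ) : Prop :=
  Differentiable ℂ f ∧ ∀ n : ℕ, 0 < n →
    BddAbove (Set.range fun z : ℂ => ‖f z‖ * Real.exp (-(suppFn K z) - ‖z‖ / n))

open scoped Classical in
/-- Lower density of a set of natural numbers. -/
noncomputable def lowerDensity (A : Set ℕ) : ℝ :=
  liminf (fun N : ℕ =>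
    (((Finset.range (N + 1)).filter (fun n => n ∈ A)).card : ℝ) / N) atTop

/-- Lower density of a discrete subset of `ℂ`. -/
noncomputable def ldensC (Λ : Set ℂ) : ℝ :=
  liminf (fun r : ℝ => (Nat.card {z : ℂ // z ∈ Λ ∧ ‖z‖ ≤ r} : ℝ) / r) atTop

/-- `f` is hypercyclic for the translation `T₁` on `Exp(K)`. -/
def HCExp (K : Set ℂ) (f : ℂ → ℂ) : Prop :=
  MemExp K f ∧ ∀ g : ℂ → ℂ, MemExp K g → ∀ n : ℕ, 0 < n → ∀ ε > (0 : ℝ),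
    ∃ k : ℕ, expNorm K n (fun z => f (z + (k : ℂ)) - g z) < ε

/-- `f` is frequently hypercyclic for the translation `T₁` on `Exp(K)`. -/
def FHCExp (K : Set ℂ) (f : ℂ → ℂ) : Prop :=
  MemExp K f ∧ ∀ g : ℂ → ℂ, MemExp K g → ∀ n : ℕ, 0 < n → ∀ ε > (0 : ℝ),
    0 < lowerDensity {k : ℕ | expNorm K n (fun z => f (z + (k : ℂ)) - g z) < ε}

/-- `f` is hypercyclic (Birkhoff-universal) for `T₁` on `H(ℂ)`. -/
def HCEnt (f : ℂ → ℂ) : Prop :=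
  Differentiable ℂ f ∧ ∀ g : ℂ → ℂ, Differentiable ℂ g → ∀ R > (0 : ℝ), ∀ ε > (0 : ℝ),
    ∃ k : ℕ, ∀ z : ℂ, ‖z‖ ≤ R → ‖f (z + (k : ℂ)) - g z‖ < ε

/-- `f` is frequently hypercyclic (frequently Birkhoff-universal) for `T₁` on `H(ℂ)`. -/
def FHCEnt (f : ℂ → ℂ) : Prop :=
  Differentiable ℂ f ∧ ∀ g : ℂ → ℂ, Differentiable ℂ g → ∀ R > (0 : ℝ), ∀ ε > (0 : ℝ),
    0 < lowerDensity {k : ℕ | ∀ z : ℂ, ‖z‖ ≤ R → ‖f (z + (k : ℂ)) - g z‖ < ε}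

/-- `f` is an entire function of (finite) exponential type. -/
def ExpType (f : ℂ → ℂ) : Prop :=
  Differentiable ℂ f ∧ ∃ C τ : ℝ, ∀ z : ℂ, ‖f z‖ ≤ C * Real.exp (τ * ‖z‖)

/-- The indicator function `h_f(θ) = limsup_{r→∞} log |f(r e^{iθ})| / r`. -/
noncomputable def indicatorFn (f : ℂ → ℂ) (θ : ℝ) : ℝ :=
  limsup (fun r : ℝ => Real.log ‖f ((r : ℂ) * Complex.exp (θ * Complex.I))‖ / r) atTop

/-!
Write `z₀` for the point of `K` on the imaginary axis and `F z = f z * exp (-z z₀)`; this factor has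
modulus one on the real axis. Since `K` meets the axis only at `z₀`, compactness gives
`H_K(z) ≤ Re (z z₀) + η |Im z|` in a narrow sector around the positive real axis, for every `η > 0`,
so the growth of `F` on discs about large `x > 0` is of smaller exponential order than their radius.
By Jensen's inequality `F` then has few zeros near those `x` at which it is not small.
If `f (· + k)` is close to the identity near `0`, then `f` has a zero close to `k` while
`F (k + 1 / 2)` is bounded away from `0`. Hence the set of such `k` is sparse in every interval
`[k, (1 + σ) k]` starting at one of its points, and covering `[0, N]` by boundedly many short
intervals shows that it has natural density zero.
-/

open Metric Topology
open scoped Finset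

section ComplexAnalysis

theorem exists_mem_closedBall_eq_zero_of_norm_lt {g : ℂ → ℂ} {c : ℂ} {r : ℝ} (hr : 0 < r)
    (hg : DiffContOnCl ℂ g (ball c r)) (hlt : ∀ z ∈ sphere c r, ‖g c‖ < ‖g z‖) :
    ∃ w ∈ closedBall c r, g w = 0 := by
  by_contra! hne
  rw [← closure_ball c hr.ne'] at hne
  obtain ⟨z, hz, hmax⟩ := exists_mem_frontier_isMaxOn_norm isBounded_ball (nonempty_ball.2 hr)
    (hg.inv hne)
  have hc : c ∈ closure (ball c r) := subset_closure (mem_ball_self hr)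
  have hinv : ‖g c‖⁻¹ ≤ ‖g z‖⁻¹ := by simpa using hmax hc
  rw [frontier_ball c hr.ne'] at hz
  exact hinv.not_gt (inv_strictAnti₀ (norm_pos_iff.2 (hne c hc)) (hlt z hz))

theorem one_le_divisor_of_eq_zero {𝕜 E : Type*} [NontriviallyNormedField 𝕜]
    [NormedAddCommGroup E] [NormedSpace 𝕜 E] {F : 𝕜 → E} {U : Set 𝕜} {c w : 𝕜}
    (hF : AnalyticOnNhd 𝕜 F U) (hU : IsPreconnected U) (hc : c ∈ U) (hFc : F c ≠ 0)
    (hw : w ∈ U) (hFw : F w = 0) :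
    1 ≤ MeromorphicOn.divisor F U w := by
  have hc_order : analyticOrderAt F c ≠ ⊤ := by
    simp [(hF c hc).analyticOrderAt_eq_zero.2 hFc]
  have htop : analyticOrderAt F w ≠ ⊤ :=
    hF.analyticOrderAt_ne_top_of_isPreconnected hU hc hw hc_order
  have hzero : analyticOrderAt F w ≠ 0 := (hF w hw).analyticOrderAt_ne_zero.2 hFw
  obtain ⟨n, hn⟩ := ENat.ne_top_iff_exists.1 htop
  rw [MeromorphicOn.AnalyticOnNhd.divisor_apply hF hw, ← hn]
  rw [← hn] at hzero
  simpa [Nat.one_le_iff_ne_zero] using hzero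

theorem card_zeros_le_log_div_log {F : ℂ → ℂ} {c : ℂ} {r R M : ℝ} (hr : 0 < r) (hrR : r < R)
    (hM : 1 ≤ M) (hF : AnalyticOnNhd ℂ F (closedBall c R)) (hFc : F c ≠ 0)
    (hFM : ∀ z ∈ sphere c R, ‖F z‖ ≤ M) {Z : Finset ℂ} (hZr : ∀ w ∈ Z, w ∈ closedBall c r)
    (hZ : ∀ w ∈ Z, F w = 0) : (#Z : ℝ) ≤ Real.log (M / ‖F c‖) / Real.log (R / r) := by
  have hR : 0 < R := hr.trans hrR
  have hFr : AnalyticOnNhd ℂ F (closedBall c r) := hF.mono (closedBall_subset_closedBall hrR.le)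
  set D := MeromorphicOn.divisor F (closedBall c r)
  have hD : 0 ≤ D := MeromorphicOn.AnalyticOnNhd.divisor_nonneg hFr
  have hfin : (Function.support D).Finite := D.finiteSupport (isCompact_closedBall c r)
  have hcard : (#Z : ℤ) ≤ ∑ᶠ w, D w := by
    classical
    rw [finsum_eq_sum_of_support_subset (s := hfin.toFinset ∪ Z) D (by simp)]
    calc (#Z : ℤ) = ∑ w ∈ Z, 1 := by simp
      _ ≤ ∑ w ∈ Z, D w := Finset.sum_le_sum fun w hw ↦ one_le_divisor_of_eq_zero hFr
          (convex_closedBall c r).isPreconnected (mem_closedBall_self hr.le) hFc (hZr w hw)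
          (hZ w hw)
      _ ≤ ∑ w ∈ hfin.toFinset ∪ Z, D w :=
          Finset.sum_le_sum_of_subset_of_nonneg Finset.subset_union_right fun w _ _ ↦ hD w
  rw [← abs_of_pos hR] at hF hFM
  calc (#Z : ℝ) ≤ ((∑ᶠ w, D w : ℤ) : ℝ) := mod_cast hcard
    _ ≤ _ := by
      have hjensen := hF.sum_divisor_le (abs_pos.2 hr.ne')
        (by rwa [abs_of_pos hr, abs_of_pos hR]) hM hFc hFM
      rwa [abs_of_pos hr] at hjensen

end ComplexAnalysis

section Density

variable {A : Set ℕ}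

open scoped Classical in
/-- The set `A` has natural density zero; the quotients are the ones in `lowerDensity`. -/
def HasDensityZero (A : Set ℕ) : Prop :=
  Tendsto (fun N : ℕ ↦ (#{n ∈ Finset.range (N + 1) | n ∈ A} : ℝ) / N) atTop (𝓝 0)

theorem HasDensityZero.lowerDensity_eq_zero (hA : HasDensityZero A) :
    lowerDensity A = 0 :=
  hA.liminf_eq

theorem hasDensityZero_of_forall_eventually_card_le
    (h : ∀ δ > 0, ∀ᶠ N : ℕ in atTop, ∀ S : Finset ℕ, (∀ k ∈ S, k ∈ A ∧ k ≤ N) →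
      (#S : ℝ) ≤ δ * N) : HasDensityZero A := by
  classical
  refine tendsto_order.2 ⟨fun a ha ↦ .of_forall fun N ↦ ha.trans_le (by positivity),
    fun δ hδ ↦ ?_⟩
  filter_upwards [h (δ / 2) (half_pos hδ), eventually_gt_atTop 0] with N hN hN0
  have hN0' : (0 : ℝ) < N := Nat.cast_pos.2 hN0
  rw [div_lt_iff₀ hN0']
  refine (hN _ fun k hk ↦ ?_).trans_lt (by nlinarith)
  rw [Finset.mem_filter, Finset.mem_range_succ_iff] at hk
  exact hk.symm

/-- `A` is sparse in short intervals: for every `ε > 0` there is a relative length `σ` such that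
for all large `k ∈ A` the interval `[k, (1 + σ) k]`, of length `σ k`, contains at most `ε σ k`
elements of `A`. The elements are counted through the finite subsets of the intersection. -/
def IsSparseInShortIntervals (A : Set ℕ) : Prop :=
  ∀ ε > 0, ∃ σ ∈ Set.Ioc (0 : ℝ) 1, ∀ᶠ k : ℕ in atTop, k ∈ A → ∀ T : Finset ℕ,
    (∀ l ∈ T, l ∈ A ∧ k ≤ l ∧ (l : ℝ) ≤ (1 + σ) * k) → (#T : ℝ) ≤ ε * σ * k

theorem card_le_mul_of_forall_card_Ico_le {S : Finset ℕ} {N L B : ℕ} (hL : 0 < L)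
    (hSN : ∀ k ∈ S, k ≤ N) (hB : ∀ k ∈ S, #{l ∈ S | k ≤ l ∧ l < k + L} ≤ B) :
    #S ≤ B * (N / L + 1) := by
  have hmaps : ∀ k ∈ S, k / L ∈ Finset.range (N / L + 1) := fun k hk ↦
    Finset.mem_range_succ_iff.2 (Nat.div_le_div_right (hSN k hk))
  rw [← Finset.card_range (N / L + 1)]
  refine Finset.card_le_mul_card_image_of_maps_to hmaps B fun j _ ↦ ?_
  rcases Finset.eq_empty_or_nonempty {l ∈ S | l / L = j} with hempty | hne
  · simp [hempty]
  obtain ⟨k, hk, hmin⟩ := Finset.exists_min_image _ id hne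
  rw [Finset.mem_filter] at hk
  refine (Finset.card_le_card fun l hl ↦ ?_).trans (hB k hk.1)
  have hkl : k ≤ l := hmin l hl
  rw [Finset.mem_filter] at hl ⊢
  have hlt : l < k + L := by
    have hk_div := Nat.div_add_mod k L
    have hl_div := Nat.div_add_mod l L
    have hl_mod := Nat.mod_lt l hL
    rw [hk.2] at hk_div
    rw [hl.2] at hl_div
    omega
  exact ⟨hl.1, hkl, hlt⟩

theorem card_le_add_mul_of_forall_window {S : Finset ℕ} {N : ℕ} {a ℓ b : ℝ} (ha : 0 ≤ a)
    (hℓ : 1 ≤ ℓ) (hb : 0 ≤ b) (hSN : ∀ k ∈ S, k ≤ N)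
    (hwindow : ∀ k ∈ S, a ≤ k → (#{l ∈ S | k ≤ l ∧ (l : ℝ) ≤ k + ℓ} : ℝ) ≤ b) :
    (#S : ℝ) ≤ a + 1 + b * (2 * N / ℓ + 1) := by
  have hL : 0 < ⌊ℓ⌋₊ := Nat.floor_pos.2 hℓ
  have hLℓ : ℓ / 2 ≤ ⌊ℓ⌋₊ := by
    have hlt := Nat.lt_floor_add_one ℓ
    have hge : (1 : ℝ) ≤ ⌊ℓ⌋₊ := by exact_mod_cast hL
    linarith
  have hsmall : (#{k ∈ S | ¬a ≤ ((k : ℕ) : ℝ)} : ℝ) ≤ a + 1 := by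
    have hsub : {k ∈ S | ¬a ≤ ((k : ℕ) : ℝ)} ⊆ Finset.range ⌈a⌉₊ := fun k hk ↦
      Finset.mem_range.2 (Nat.lt_ceil.2 (not_le.1 (Finset.mem_filter.1 hk).2))
    have hcard := Finset.card_le_card hsub
    rw [Finset.card_range] at hcard
    exact (Nat.cast_le.2 hcard).trans (Nat.ceil_lt_add_one ha).le
  have hlarge : #{k ∈ S | a ≤ ((k : ℕ) : ℝ)} ≤ ⌊b⌋₊ * (N / ⌊ℓ⌋₊ + 1) := by
    refine card_le_mul_of_forall_card_Ico_le hL (fun k hk ↦ hSN k (Finset.mem_filter.1 hk).1)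
      fun k hk ↦ Nat.le_floor ?_
    rw [Finset.mem_filter] at hk
    refine (Nat.cast_le.2 (Finset.card_le_card fun l hl ↦ ?_)).trans (hwindow k hk.1 hk.2)
    simp only [Finset.mem_filter] at hl ⊢
    have hlk : (l : ℝ) ≤ k + ⌊ℓ⌋₊ := by exact_mod_cast hl.2.2.le
    exact ⟨hl.1.1, hl.2.1, hlk.trans (by gcongr; exact Nat.floor_le (by linarith))⟩
  calc (#S : ℝ) = #{k ∈ S | ¬a ≤ ((k : ℕ) : ℝ)} + #{k ∈ S | a ≤ ((k : ℕ) : ℝ)} := by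
        rw [add_comm]
        exact_mod_cast (Finset.card_filter_add_card_filter_not _).symm
    _ ≤ a + 1 + (⌊b⌋₊ * (N / ⌊ℓ⌋₊ + 1) : ℕ) := by gcongr
    _ ≤ a + 1 + b * (N / (ℓ / 2) + 1) := by
        push_cast
        gcongr
        · exact Nat.floor_le hb
        · exact Nat.cast_div_le.trans (by gcongr)
    _ = a + 1 + b * (2 * N / ℓ + 1) := by rw [div_div_eq_mul_div, mul_comm (N : ℝ) 2]

theorem IsSparseInShortIntervals.hasDensityZero (hA : IsSparseInShortIntervals A) :
    HasDensityZero A := by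
  refine hasDensityZero_of_forall_eventually_card_le fun δ hδ ↦ ?_
  set ε := δ ^ 2 / (4 * (4 + δ)) with hε
  obtain ⟨σ, ⟨hσ0, hσ1⟩, hσ⟩ := hA ε (by positivity)
  obtain ⟨k₀, hk₀⟩ := eventually_atTop.1 hσ
  filter_upwards [tendsto_natCast_atTop_atTop.eventually_ge_atTop (2 * k₀ / δ),
    tendsto_natCast_atTop_atTop.eventually_ge_atTop (4 / (σ * δ))] with N hNk hNσ S hS
  rw [div_le_iff₀ hδ] at hNk
  rw [div_le_iff₀ (by positivity)] at hNσ
  have hδN : 4 ≤ δ * N := by nlinarith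
  have hN0 : (0 : ℝ) < N := by by_contra! hN; nlinarith
  have hwindow : ∀ k ∈ S, δ * N / 2 ≤ k →
      (#{l ∈ S | k ≤ l ∧ (l : ℝ) ≤ k + σ * (δ * N / 2)} : ℝ) ≤ ε * σ * N := by
    intro k hk hkN
    have hk₀k : k₀ ≤ k := Nat.cast_le.1 (by linarith : (k₀ : ℝ) ≤ k)
    calc _ ≤ ε * σ * k := hk₀ k hk₀k (hS k hk).1 _ fun l hl ↦ by
          rw [Finset.mem_filter] at hl
          exact ⟨(hS l hl.1).1, hl.2.1, by nlinarith⟩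
      _ ≤ ε * σ * N := by gcongr; exact (hS k hk).2
  calc (#S : ℝ) ≤ δ * N / 2 + 1 + ε * σ * N * (2 * N / (σ * (δ * N / 2)) + 1) :=
        card_le_add_mul_of_forall_window (by positivity) (by nlinarith) (by positivity)
          (fun k hk ↦ (hS k hk).2) hwindow
    _ = δ * N / 2 + 1 + ε * (4 / δ + σ) * N := by field_simp; ring
    _ ≤ δ * N / 2 + δ * N / 4 + ε * (4 / δ + 1) * N := by gcongr; linarith
    _ = δ * N := by rw [hε]; field_simp; ring

end Density

section Growth

/-- `F` has subexponential growth near the positive real axis: for every `η > 0` it is bounded by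
`exp (η s x)` on the discs of some relative radius `s` about all large `x > 0`. For `F` of
exponential type this bounds the indicator function by `h_F(θ) ≤ o(|θ|)` as `θ → 0`. -/
def IsSubexpNearPosReal (F : ℂ → ℂ) : Prop :=
  ∀ η > 0, ∃ s ∈ Set.Ioc (0 : ℝ) 1, ∀ᶠ x : ℝ in atTop,
    ∀ z ∈ closedBall (x : ℂ) (s * x), ‖F z‖ ≤ Real.exp (η * (s * x))

theorem exists_pos_forall_le_add_mul {X : Type*} [TopologicalSpace X] {K : Set X}
    (hK : IsCompact K) {φ ψ : X → ℝ} (hφ : Continuous φ) (hψ : Continuous ψ)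
    {η : ℝ} (hψ0 : ∀ x ∈ K, 0 ≤ ψ x) (hφψ : ∀ x ∈ K, ψ x = 0 → φ x < η) :
    ∃ t > 0, ∀ x ∈ K, φ x ≤ η + t * ψ x := by
  have hcompact : IsCompact (K ∩ {x | η ≤ φ x}) :=
    hK.inter_right (isClosed_le continuous_const hφ)
  have hψ_pos : ∀ x ∈ K ∩ {x | η ≤ φ x}, 0 < ψ x := fun x hx ↦
    (hψ0 x hx.1).lt_of_ne' fun h0 ↦ (hφψ x hx.1 h0).not_ge hx.2
  obtain ⟨t, ht⟩ := hcompact.exists_bound_of_continuousOn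
    ((hφ.sub (continuous_const (y := η))).continuousOn.div hψ.continuousOn
      fun x hx ↦ (hψ_pos x hx).ne')
  refine ⟨max t 1, by positivity, fun x hx ↦ ?_⟩
  have htψ : 0 ≤ max t 1 * ψ x := mul_nonneg (by positivity) (hψ0 x hx)
  rcases lt_or_ge (φ x) η with hlt | hge
  · linarith
  · have hratio : (φ x - η) / ψ x ≤ max t 1 :=
      (le_abs_self _).trans ((ht x ⟨hx, hge⟩).trans (le_max_left t 1))
    rw [div_le_iff₀ (hψ_pos x ⟨hx, hge⟩)] at hratio
    linarith

variable {K : Set ℂ} {f : ℂ → ℂ} {z₀ : ℂ}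

theorem exists_pos_forall_suppFn_le (hne : K.Nonempty) (hKc : IsCompact K)
    (hK : K ⊆ {z : ℂ | z.re ≤ 0}) (hz₀ : z₀.re = 0) (hsub : K ∩ {z : ℂ | z.re = 0} ⊆ {z₀})
    {η : ℝ} (hη : 0 < η) :
    ∃ t > 0, ∀ z : ℂ, t * |z.im| ≤ z.re → suppFn K z ≤ (z * z₀).re + η * |z.im| := by
  obtain ⟨t, ht, hKt⟩ := exists_pos_forall_le_add_mul hKc (φ := fun u : ℂ ↦ |u.im - z₀.im|)
    (ψ := fun u : ℂ ↦ -u.re) (by fun_prop) (by fun_prop) (fun u hu ↦ neg_nonneg.2 (hK hu))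
    (fun u hu hu0 ↦ by rwa [hsub ⟨hu, neg_eq_zero.1 hu0⟩, sub_self, abs_zero])
  refine ⟨t, ht, fun z hz ↦ csSup_le (hne.image _) ?_⟩
  rintro _ ⟨u, hu, rfl⟩
  have hu_re : u.re ≤ 0 := hK hu
  calc (z * u).re = (z * z₀).re + z.re * u.re + -(z.im * (u.im - z₀.im)) := by
        simp only [mul_re, hz₀]; ring
    _ ≤ (z * z₀).re + t * |z.im| * u.re + |z.im| * |u.im - z₀.im| := by
        rw [← abs_mul]
        exact add_le_add (by gcongr _ + ?_; exact mul_le_mul_of_nonpos_right hz hu_re)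
          (neg_le_abs _)
    _ ≤ (z * z₀).re + t * |z.im| * u.re + |z.im| * (η + t * -u.re) := by
        gcongr
        exact hKt u hu
    _ = (z * z₀).re + η * |z.im| := by ring

theorem MemExp.exists_norm_le (hf : MemExp K f) {n : ℕ} (hn : 0 < n) :
    ∃ C, ∀ z, ‖f z‖ ≤ C * Real.exp (suppFn K z + ‖z‖ / n) := by
  obtain ⟨C, hC⟩ := hf.2 n hn
  refine ⟨C, fun z ↦ ?_⟩
  have hz : ‖f z‖ * Real.exp (-(suppFn K z) - ‖z‖ / n) ≤ C := hC ⟨z, rfl⟩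
  rwa [← neg_add', Real.exp_neg, ← div_eq_mul_inv, div_le_iff₀ (Real.exp_pos _)] at hz

theorem MemExp.exists_norm_mul_exp_le (hf : MemExp K f) (hne : K.Nonempty) (hKc : IsCompact K)
    (hK : K ⊆ {z : ℂ | z.re ≤ 0}) (hz₀ : z₀.re = 0) (hsub : K ∩ {z : ℂ | z.re = 0} ⊆ {z₀})
    {η : ℝ} (hη : 0 < η) :
    ∃ t > 0, ∀ n : ℕ, 0 < n → ∃ C, ∀ z : ℂ, t * |z.im| ≤ z.re →
      ‖f z * exp (-(z * z₀))‖ ≤ C * Real.exp (η * |z.im| + ‖z‖ / n) := by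
  obtain ⟨t, ht, hsupp⟩ := exists_pos_forall_suppFn_le hne hKc hK hz₀ hsub hη
  refine ⟨t, ht, fun n hn ↦ ?_⟩
  obtain ⟨C, hC⟩ := hf.exists_norm_le hn
  have hC0 : 0 ≤ C := nonneg_of_mul_nonneg_left ((norm_nonneg _).trans (hC 0)) (Real.exp_pos _)
  refine ⟨C, fun z hz ↦ ?_⟩
  calc ‖f z * exp (-(z * z₀))‖ = ‖f z‖ * Real.exp (-(z * z₀).re) := by
        rw [norm_mul, norm_exp, neg_re]
    _ ≤ C * Real.exp (suppFn K z + ‖z‖ / n) * Real.exp (-(z * z₀).re) := by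
        gcongr
        exact hC z
    _ = C * Real.exp (suppFn K z - (z * z₀).re + ‖z‖ / n) := by
        rw [mul_assoc, ← Real.exp_add]; ring_nf
    _ ≤ C * Real.exp (η * |z.im| + ‖z‖ / n) := by
        gcongr
        linarith [hsupp z hz]

theorem abs_im_le_of_mem_closedBall_ofReal {x r : ℝ} {z : ℂ} (hz : z ∈ closedBall (x : ℂ) r) :
    |z.im| ≤ r := by
  simpa using (abs_im_le_norm (z - x)).trans (mem_closedBall_iff_norm.1 hz)

theorem sub_le_re_of_mem_closedBall_ofReal {x r : ℝ} {z : ℂ} (hz : z ∈ closedBall (x : ℂ) r) :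
    x - r ≤ z.re := by
  have hre : |z.re - x| ≤ r := by
    simpa using (abs_re_le_norm (z - x)).trans (mem_closedBall_iff_norm.1 hz)
  linarith [neg_le_of_abs_le hre]

theorem MemExp.isSubexpNearPosReal (hf : MemExp K f) (hne : K.Nonempty) (hKc : IsCompact K)
    (hK : K ⊆ {z : ℂ | z.re ≤ 0}) (hz₀ : z₀.re = 0) (hsub : K ∩ {z : ℂ | z.re = 0} ⊆ {z₀}) :
    IsSubexpNearPosReal fun z ↦ f z * exp (-(z * z₀)) := by
  intro η hη
  obtain ⟨t, ht, hsector⟩ := hf.exists_norm_mul_exp_le hne hKc hK hz₀ hsub (η := η / 4)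
    (by positivity)
  -- For this `s` the disc of radius `s x` about `x` lies in the sector `t |Im z| ≤ Re z`.
  set s := 1 / (1 + t) with hs
  have hs0 : 0 < s := by positivity
  have hs1 : s ≤ 1 := (div_le_one (by positivity)).2 (by linarith)
  have hts (x : ℝ) : t * (s * x) = x - s * x := by rw [hs]; field_simp; ring
  obtain ⟨n, hn⟩ := exists_nat_gt (8 / (η * s))
  have hn0 : (0 : ℝ) < n := lt_trans (by positivity) hn
  obtain ⟨C, hC⟩ := hsector n (Nat.cast_pos.1 hn0)
  have hexp : Tendsto (fun x : ℝ ↦ Real.exp (η / 2 * (s * x))) atTop atTop :=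
    Real.tendsto_exp_atTop.comp
      ((tendsto_id.const_mul_atTop hs0).const_mul_atTop (by positivity))
  refine ⟨s, ⟨hs0, hs1⟩, ?_⟩
  filter_upwards [hexp.eventually_ge_atTop C, eventually_gt_atTop 0] with x hCx hx z hz
  have him : |z.im| ≤ s * x := abs_im_le_of_mem_closedBall_ofReal hz
  have hz_sector : t * |z.im| ≤ z.re :=
    calc t * |z.im| ≤ t * (s * x) := by gcongr
      _ = x - s * x := hts x
      _ ≤ z.re := sub_le_re_of_mem_closedBall_ofReal hz
  have hnorm : ‖z‖ ≤ 2 * x := by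
    have hz_norm : ‖z‖ ≤ ‖(x : ℂ)‖ + s * x := norm_le_of_mem_closedBall hz
    rw [norm_real, Real.norm_of_nonneg hx.le] at hz_norm
    nlinarith
  have hzn : ‖z‖ / n ≤ η / 4 * (s * x) := by
    rw [div_lt_iff₀ (by positivity)] at hn
    rw [div_le_iff₀ hn0]
    nlinarith
  calc ‖f z * exp (-(z * z₀))‖ ≤ C * Real.exp (η / 4 * |z.im| + ‖z‖ / n) := hC z hz_sector
    _ ≤ Real.exp (η / 2 * (s * x)) * Real.exp (η / 2 * (s * x)) := by
        gcongr
        nlinarith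
    _ = Real.exp (η * (s * x)) := by rw [← Real.exp_add]; ring_nf

end Growth

section ZerosNearIntegers

theorem eq_of_mem_closedBall_natCast {k l : ℕ} {w : ℂ} {r : ℝ} (hr : r < 1 / 2)
    (hk : w ∈ closedBall (k : ℂ) r) (hl : w ∈ closedBall (l : ℂ) r) : k = l := by
  by_contra hkl
  have hdist : dist (k : ℂ) l < 1 :=
    (dist_triangle_left _ _ w).trans_lt (by rw [mem_closedBall] at hk hl; linarith)
  rw [← ofReal_natCast k, ← ofReal_natCast l, isometry_ofReal.dist_eq, Nat.dist_cast_real] at hdist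
  exact hdist.not_ge (Nat.pairwise_one_le_dist hkl)

theorem card_le_log_of_zeros_near_natCast {F : ℂ → ℂ} {c : ℂ} {R M r : ℝ} {T : Finset ℕ}
    (hF : AnalyticOnNhd ℂ F (closedBall c R)) (hR : 0 < R) (hM : 1 ≤ M) (hFc : F c ≠ 0)
    (hFM : ∀ z ∈ sphere c R, ‖F z‖ ≤ M) (hr : r < 1 / 2)
    (hT : ∀ l ∈ T, closedBall (l : ℂ) r ⊆ closedBall c (R / 3))
    (hzero : ∀ l ∈ T, ∃ w ∈ closedBall (l : ℂ) r, F w = 0) :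
    (#T : ℝ) ≤ Real.log (M / ‖F c‖) := by
  classical
  choose! ζ hζ hFζ using hzero
  have hinj : Set.InjOn ζ T := fun k hk l hl hkl ↦
    eq_of_mem_closedBall_natCast hr (hζ k hk) (hkl ▸ hζ l hl)
  have hjensen : (#(T.image ζ) : ℝ) ≤ Real.log (M / ‖F c‖) / Real.log (R / (R / 3)) :=
    card_zeros_le_log_div_log (by positivity) (by linarith) hM hF hFc hFM
      (Finset.forall_mem_image.2 fun l hl ↦ hT l hl (hζ l hl)) (Finset.forall_mem_image.2 hFζ)
  rw [Finset.card_image_of_injOn hinj, div_div_cancel₀ hR.ne'] at hjensen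
  have hlog3 : 1 ≤ Real.log 3 :=
    (Real.le_log_iff_exp_le (by norm_num)).2 Real.exp_one_lt_three.le
  exact (le_mul_of_one_le_right (Nat.cast_nonneg _) hlog3).trans
    ((le_div_iff₀ (by positivity)).1 hjensen)

theorem isSparseInShortIntervals_of_zeros {F : ℂ → ℂ} (hF : Differentiable ℂ F)
    (hgrowth : IsSubexpNearPosReal F) {A : Set ℕ} {m r : ℝ} (hm : 0 < m)
    (hlower : ∀ k ∈ A, m ≤ ‖F (k + 1 / 2)‖) (hr : r < 1 / 2)
    (hzero : ∀ k ∈ A, ∃ w ∈ closedBall (k : ℂ) r, F w = 0) :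
    IsSparseInShortIntervals A := by
  intro ε hε
  obtain ⟨s, ⟨hs0, hs1⟩, hs⟩ := hgrowth (ε / 8) (by positivity)
  have hshift : Tendsto (fun k : ℕ ↦ (k : ℝ) + 1 / 2) atTop atTop :=
    tendsto_atTop_add_const_right _ _ tendsto_natCast_atTop_atTop
  refine ⟨s / 4, ⟨by positivity, by linarith⟩, ?_⟩
  filter_upwards [hshift.eventually hs,
    tendsto_natCast_atTop_atTop.eventually_ge_atTop (12 / s),
    tendsto_natCast_atTop_atTop.eventually_ge_atTop ((ε * s / 16 - Real.log m) / (ε * s / 8))]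
    with k hgrow hks hkm hkA T hT
  rw [div_le_iff₀ (by positivity)] at hks hkm
  set x : ℝ := k + 1 / 2 with hx
  have hxc : (x : ℂ) = k + 1 / 2 := by push_cast [hx]; rfl
  have hFx : m ≤ ‖F x‖ := hxc ▸ hlower k hkA
  have hsubset : ∀ l ∈ T, closedBall (l : ℂ) r ⊆ closedBall (x : ℂ) (s * x / 3) := by
    intro l hl
    obtain ⟨-, hkl, hlk⟩ := hT l hl
    have hkl' : (k : ℝ) ≤ l := Nat.cast_le.2 hkl
    refine closedBall_subset_closedBall' ?_
    rw [← ofReal_natCast l, isometry_ofReal.dist_eq, Real.dist_eq]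
    have habs : |(l : ℝ) - x| ≤ s / 4 * k + 1 / 2 := abs_le.2 ⟨by nlinarith, by linarith⟩
    nlinarith
  calc (#T : ℝ) ≤ Real.log (Real.exp (ε / 8 * (s * x)) / ‖F x‖) :=
        card_le_log_of_zeros_near_natCast (fun z _ ↦ hF.analyticAt z)
          (by positivity : 0 < s * x) (Real.one_le_exp (by positivity))
          (norm_pos_iff.1 (hm.trans_le hFx)) (fun z hz ↦ hgrow z (sphere_subset_closedBall hz))
          hr hsubset fun l hl ↦ hzero l (hT l hl).1
    _ ≤ Real.log (Real.exp (ε / 8 * (s * x)) / m) :=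
        Real.log_le_log (div_pos (Real.exp_pos _) (hm.trans_le hFx)) (by gcongr)
    _ = ε * s / 8 * k + (ε * s / 16 - Real.log m) := by
        rw [Real.log_div (Real.exp_pos _).ne' hm.ne', Real.log_exp, hx]; ring
    _ ≤ ε * s / 8 * k + k * (ε * s / 8) := by gcongr
    _ = ε * (s / 4) * k := by ring

end ZerosNearIntegers

theorem exists_mem_closedBall_eq_zero_of_near_id {f : ℂ → ℂ} {a : ℂ} {r : ℝ} (hr : 0 < r)
    (hf : DiffContOnCl ℂ f (ball a r)) (hfa : ∀ z, ‖z‖ ≤ r → ‖f (z + a) - z‖ < r / 2) :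
    ∃ w ∈ closedBall a r, f w = 0 := by
  refine exists_mem_closedBall_eq_zero_of_norm_lt hr hf fun z hz ↦ ?_
  rw [mem_sphere_iff_norm] at hz
  have hcenter : ‖f a‖ < r / 2 := by simpa using hfa 0 (by simpa using hr.le)
  have hsphere := hfa (z - a) hz.le
  rw [sub_add_cancel] at hsphere
  linarith [norm_sub_norm_le (z - a) (f z), norm_sub_rev (z - a) (f z)]

theorem stmt5_general {K : Set ℂ} {f : ℂ → ℂ} (hne : K.Nonempty) (hKc : IsCompact K)
    (hK : K ⊆ {z : ℂ | z.re ≤ 0}) (hsub : (K ∩ {z : ℂ | z.re = 0}).Subsingleton)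
    (hf : MemExp K f) :
    HasDensityZero {k : ℕ | ∀ z : ℂ, ‖z‖ ≤ 1 / 2 → ‖f (z + k) - z‖ < 1 / 8} := by
  obtain ⟨z₀, hz₀, hsub⟩ : ∃ z₀ : ℂ, z₀.re = 0 ∧ K ∩ {z : ℂ | z.re = 0} ⊆ {z₀} := by
    rcases hsub.eq_empty_or_singleton with h | ⟨z₀, h⟩
    · exact ⟨0, zero_re, h.subset.trans (Set.empty_subset _)⟩
    · exact ⟨z₀, (h.ge rfl).2, h.subset⟩
  have hF : Differentiable ℂ fun z ↦ f z * exp (-(z * z₀)) := hf.1.mul (by fun_prop)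
  refine (isSparseInShortIntervals_of_zeros (m := 3 / 8) hF
    (hf.isSubexpNearPosReal hne hKc hK hz₀ hsub) (by norm_num) (fun k hk ↦ ?_)
    (by norm_num : (1 / 4 : ℝ) < 1 / 2) fun k hk ↦ ?_).hasDensityZero
  · have hnorm : ‖exp (-((k + 1 / 2) * z₀))‖ = 1 := by simp [norm_exp, hz₀]
    have hhalf : ‖(1 / 2 : ℂ)‖ = 1 / 2 := by norm_num
    have hnear := hk (1 / 2) hhalf.le
    rw [norm_mul, hnorm, mul_one, add_comm]
    linarith [norm_sub_norm_le (1 / 2) (f (1 / 2 + k)), norm_sub_rev (1 / 2) (f (1 / 2 + k))]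
  · obtain ⟨w, hw, hfw⟩ := exists_mem_closedBall_eq_zero_of_near_id
      (by norm_num : (0 : ℝ) < 1 / 4) hf.1.diffContOnCl
      fun z hz ↦ (hk z (by linarith)).trans_eq (by norm_num)
    exact ⟨w, hw, by rw [hfw, zero_mul]⟩

/-- **Theorem 7.** If `K` is a compact convex subset of the closed left half-plane whose
intersection with the imaginary axis is a singleton, then no function of `Exp(K)` is
frequently hypercyclic for `T₁` on `H(ℂ)`. -/
theorem stmt5 (K : Set ℂ) (hne : K.Nonempty) (hKc : IsCompact K) (hKconv : Convex ℝ K)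
    (hK : K ⊆ {z : ℂ | z.re ≤ 0})
    (hsing : ∃ z₀ : ℂ, K ∩ {z : ℂ | z.re = 0} = {z₀})
    (f : ℂ → ℂ) (hf : MemExp K f) : ¬ FHCEnt f := by
  obtain ⟨z₀, hz₀⟩ := hsing
  exact fun h ↦ (h.2 id differentiable_id (1 / 2) (by norm_num) (1 / 8) (by norm_num)).ne'
    (stmt5_general hne hKc hK (hz₀ ▸ Set.subsingleton_singleton) hf).lowerDensity_eq_zero
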